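/- Let p be a prime and let R be a δ-ring which is an algebra over ℤ localized at (p) (so in particular 1 − p^{p−1} is a unit of R). Let t_1, t_2, t_3, τ_{12}, τ_{13} ∈ R satisfy δ(t_i) = 0 for i = 1,2,3, p·τ_{12} = t_2 − t_1, and p·τ_{13} = t_3 − t_1; set τ_{23} = τ_{13} − τ_{12}. For (i,j) ∈ {(1,2),(1,3),(2,3)} define σ_{ij} = (1 − p^{p−1})^{−1}·(−δ(τ_{ij}) + ∑_{ν=1}^{p−1} (1/p)·C(p,ν)·t_i^{p−ν}·p^{ν−1}·τ_{ij}^ν). Then σ_{23} = σ_{13} + (−1)^p·σ_{12} + ∑_{ν=1}^{p−1} (1/p)·C(p,ν)·τ_{13}^ν·(−τ_{12})^{p−ν}. -/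

import Mathlib

/-- A δ-structure on a commutative ring `R`, relative to a prime `p`. -/
structure DeltaStructure (p : ℕ) (R : Type*) [CommRing R] where
  δ : R → R
  delta_zero : δ 0 = 0
  delta_one : δ 1 = 0
  delta_add : ∀ x y : R, δ (x + y) =
    δ x + δ y - ∑ i ∈ Finset.Ioo 0 p, ((p.choose i / p : ℕ) : R) * x ^ i * y ^ (p - i)
  delta_mul : ∀ x y : R, δ (x * y) =
    δ x * y ^ p + x ^ p * δ y + (p : R) * δ x * δ y

/-
Write `S(x, y) = ((x + y)^p - x^p - y^p) / p`, `G(t, x) = S(p x, t) / p`,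
`N(t, x) = G(t, x) - δ(x)` and `u = 1 - p^(p-1)`, so that `u σ₁₂ = N(t₁, τ₁₂)`. Expanding `p`-th
powers and `δ(y - x)` gives, in every δ-ring,
  `N(t + p x, y - x) = N(t, y) - N(t, x) + u (S(y, -x) - S(x, -x))`,
hence `σ₂₃ = σ₁₃ - σ₁₂ + S(τ₁₃, -τ₁₂) - S(τ₁₂, -τ₁₂)`. Since `δ(p) = u`, also
`δ(t + p x) = δ(t) + u x^p - p N(t, x)`, so `δ(t₁) = δ(t₂)` forces `τ₁₂^p = p σ₁₂`. Finally
`S(x, -x) = S(1, -1) x^p` and `p S(1, -1) = -1 - (-1)^p` turn `-σ₁₂ - S(τ₁₂, -τ₁₂)` into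
`(-1)^p σ₁₂`, for odd and even `p` alike.
-/

lemma not_dvd_one_sub_pow {A : Type*} [CommRing A] {a : A} (ha : ¬IsUnit a) {n : ℕ}
    (hn : n ≠ 0) : ¬a ∣ 1 - a ^ n := fun h =>
  ha (isUnit_of_dvd_one ((dvd_sub_left (dvd_pow_self a hn)).1 h))

section FrobeniusDefect

variable {p : ℕ}

section Semiring

variable {A B : Type*} [CommSemiring A] [CommSemiring B]

/-- For prime `p`, the integral polynomial `((x + y)^p - x^p - y^p) / p`, which measures the failure
of the `p`-th power map to be additive and is the correction term in `DeltaStructure.delta_add`. -/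
def frobeniusDefect (p : ℕ) (x y : A) : A :=
  ∑ i ∈ Finset.Ioo 0 p, ((p.choose i / p : ℕ) : A) * x ^ i * y ^ (p - i)

/-- For prime `p`, the integral polynomial `frobeniusDefect p (p * x) t / p`, that is
`((t + p * x)^p - t^p - (p * x)^p) / p^2`, which is the sum in the definition of `σ`. -/
def dividedFrobeniusDefect (p : ℕ) (t x : A) : A :=
  ∑ ν ∈ Finset.Ioo 0 p,
    ((p.choose ν / p : ℕ) : A) * t ^ (p - ν) * (p : A) ^ (ν - 1) * x ^ ν

lemma map_dividedFrobeniusDefect {F : Type*} [FunLike F A B] [RingHomClass F A B] (f : F)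
    (t x : A) :
    f (dividedFrobeniusDefect p t x) = dividedFrobeniusDefect p (f t) (f x) := by
  simp [dividedFrobeniusDefect]

lemma map_frobeniusDefect {F : Type*} [FunLike F A B] [RingHomClass F A B] (f : F) (x y : A) :
    f (frobeniusDefect p x y) = frobeniusDefect p (f x) (f y) := by
  simp [frobeniusDefect]

lemma frobeniusDefect_mul_mul (x y a : A) :
    frobeniusDefect p (x * a) (y * a) = frobeniusDefect p x y * a ^ p := by
  rw [frobeniusDefect, frobeniusDefect, Finset.sum_mul]
  refine Finset.sum_congr rfl fun i hi => ?_
  rw [← pow_mul_pow_sub a (Finset.mem_Ioo.1 hi).2.le]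
  ring

lemma natCast_mul_dividedFrobeniusDefect (t x : A) :
    (p : A) * dividedFrobeniusDefect p t x = frobeniusDefect p (p * x) t := by
  rw [dividedFrobeniusDefect, frobeniusDefect, Finset.mul_sum]
  refine Finset.sum_congr rfl fun ν hν => ?_
  rw [mul_pow, ← mul_pow_sub_one (Finset.mem_Ioo.1 hν).1.ne' (p : A)]
  ring

end Semiring

section Ring

variable {A : Type*} [CommRing A]

lemma prime_mul_frobeniusDefect (hp : p.Prime) (x y : A) :
    (p : A) * frobeniusDefect p x y = (x + y) ^ p - x ^ p - y ^ p := by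
  have hsum : frobeniusDefect p x y =
      ∑ i ∈ Finset.Ioo 0 p, x ^ i * y ^ (p - i) * ((p.choose i / p : ℕ) : A) :=
    Finset.sum_congr rfl fun i _ => by ring
  rw [hsum, add_pow_prime_eq' hp]
  ring

lemma prime_sq_mul_dividedFrobeniusDefect (hp : p.Prime) (t x : A) :
    (p : A) ^ 2 * dividedFrobeniusDefect p t x =
      (t + p * x) ^ p - t ^ p - (p : A) ^ p * x ^ p := by
  rw [sq, mul_assoc, natCast_mul_dividedFrobeniusDefect, prime_mul_frobeniusDefect hp, mul_pow]
  ring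

lemma prime_mul_frobeniusDefect_self_neg (hp : p.Prime) (x : A) :
    (p : A) * frobeniusDefect p x (-x) = -(x ^ p + (-x) ^ p) := by
  rw [prime_mul_frobeniusDefect hp, add_neg_cancel, zero_pow hp.ne_zero]
  ring

lemma dividedFrobeniusDefect_sub_of_isDomain [IsDomain A] [CharZero A] (hp : p.Prime)
    (t x y : A) :
    dividedFrobeniusDefect p (t + p * x) (y - x) =
      dividedFrobeniusDefect p t y - dividedFrobeniusDefect p t x -
        (p : A) ^ (p - 1) * (frobeniusDefect p y (-x) - frobeniusDefect p x (-x)) := by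
  refine mul_left_cancel₀ (pow_ne_zero 2 (Nat.cast_ne_zero.2 hp.ne_zero : (p : A) ≠ 0)) ?_
  have hdiff := prime_sq_mul_dividedFrobeniusDefect hp (t + p * x) (y - x)
  have hy := prime_sq_mul_dividedFrobeniusDefect hp t y
  have hx := prime_sq_mul_dividedFrobeniusDefect hp t x
  have hyx := prime_mul_frobeniusDefect hp y (-x)
  have hxx := prime_mul_frobeniusDefect_self_neg hp x
  have hpow : (p : A) * (p : A) ^ (p - 1) = (p : A) ^ p := mul_pow_sub_one hp.ne_zero _
  rw [show t + p * x + p * (y - x) = t + p * y by ring] at hdiff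
  rw [← sub_eq_add_neg] at hyx
  linear_combination hdiff - hy + hx + (p : A) ^ p * (hyx - hxx) +
    p * (frobeniusDefect p y (-x) - frobeniusDefect p x (-x)) * hpow

lemma dividedFrobeniusDefect_sub (hp : p.Prime) (t x y : A) :
    dividedFrobeniusDefect p (t + p * x) (y - x) =
      dividedFrobeniusDefect p t y - dividedFrobeniusDefect p t x -
        (p : A) ^ (p - 1) * (frobeniusDefect p y (-x) - frobeniusDefect p x (-x)) := by
  -- `p` may be a zero divisor in `A`, so the identity is specialized from `ℤ[t, x, y]`.
  have h := congrArg (MvPolynomial.aeval (R := ℤ) ![t, x, y])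
    (dividedFrobeniusDefect_sub_of_isDomain hp (MvPolynomial.X 0 : MvPolynomial (Fin 3) ℤ)
      (MvPolynomial.X 1) (MvPolynomial.X 2))
  simpa [map_dividedFrobeniusDefect, map_frobeniusDefect] using h

lemma neg_sub_frobeniusDefect_self_neg (hp : p.Prime) {x s : A} (hx : x ^ p = p * s) :
    -s - frobeniusDefect p x (-x) = (-1) ^ p * s := by
  have hone := prime_mul_frobeniusDefect_self_neg hp (1 : A)
  have hscale := frobeniusDefect_mul_mul (p := p) 1 (-1) x
  rw [one_pow] at hone
  rw [one_mul, neg_one_mul, hx] at hscale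
  linear_combination -hscale - s * hone

end Ring

end FrobeniusDefect

namespace DeltaStructure

variable {p : ℕ} {R : Type*} [CommRing R] (D : DeltaStructure p R)

/-- The right-hand side `-δ(τ) + ∑ (1/p) C(p,ν) t^(p-ν) p^(ν-1) τ^ν` of the defining equation
of `(1 - p^(p-1)) * σ`. -/
def sigmaNumerator (t τ : R) : R :=
  -D.δ τ + dividedFrobeniusDefect p t τ

lemma delta_add_eq (x y : R) : D.δ (x + y) = D.δ x + D.δ y - frobeniusDefect p x y :=
  D.delta_add x y

lemma delta_neg (x : R) : D.δ (-x) = -D.δ x + frobeniusDefect p x (-x) := by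
  have h := D.delta_add_eq x (-x)
  rw [add_neg_cancel, D.delta_zero] at h
  linear_combination -h

lemma delta_sub (x y : R) :
    D.δ (x - y) = D.δ x - D.δ y + frobeniusDefect p y (-y) - frobeniusDefect p x (-y) := by
  rw [sub_eq_add_neg, delta_add_eq, delta_neg]
  ring

/-- The integer division is exact, by the little theorem of Fermat. -/
lemma delta_natCast (hp : p.Prime) (n : ℕ) :
    D.δ (n : R) = (((n : ℤ) - (n : ℤ) ^ p) / p : ℤ) := by
  induction n with
  | zero => simp [D.delta_zero, hp.ne_zero]
  | succ n ih =>
    have hp0 : (p : ℤ) ≠ 0 := Nat.cast_ne_zero.2 hp.ne_zero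
    have hstep : ((n + 1 : ℕ) : ℤ) - ((n + 1 : ℕ) : ℤ) ^ p =
        (n - (n : ℤ) ^ p) + p * -frobeniusDefect p (n : ℤ) 1 := by
      have h := prime_mul_frobeniusDefect hp (n : ℤ) 1
      rw [one_pow] at h
      push_cast
      linear_combination h
    have hcast : ((frobeniusDefect p (n : ℤ) 1 : ℤ) : R) = frobeniusDefect p (n : R) 1 := by
      simpa using map_frobeniusDefect (p := p) (Int.castRingHom R) (n : ℤ) 1
    rw [hstep, Int.add_mul_ediv_left _ _ hp0, Nat.cast_succ, delta_add_eq, D.delta_one, ih,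
      Int.cast_add, Int.cast_neg, hcast]
    ring

lemma delta_prime (hp : p.Prime) : D.δ (p : R) = 1 - (p : R) ^ (p - 1) := by
  have hp0 : (p : ℤ) ≠ 0 := Nat.cast_ne_zero.2 hp.ne_zero
  have hfactor : (p : ℤ) - (p : ℤ) ^ p = p * (1 - (p : ℤ) ^ (p - 1)) := by
    rw [mul_sub, mul_one, mul_pow_sub_one hp.ne_zero]
  rw [D.delta_natCast hp, hfactor, Int.mul_ediv_cancel_left _ hp0]
  simp

lemma delta_prime_mul (hp : p.Prime) (x : R) :
    D.δ (p * x) = (1 - (p : R) ^ (p - 1)) * x ^ p + p * D.δ x := by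
  rw [D.delta_mul, D.delta_prime hp, ← mul_pow_sub_one hp.ne_zero (p : R)]
  ring

lemma delta_add_prime_mul (hp : p.Prime) (t x : R) :
    D.δ (t + p * x) =
      D.δ t + (1 - (p : R) ^ (p - 1)) * x ^ p - p * D.sigmaNumerator t x := by
  rw [add_comm t, delta_add_eq, D.delta_prime_mul hp, ← natCast_mul_dividedFrobeniusDefect,
    sigmaNumerator]
  ring

lemma sigmaNumerator_sub (hp : p.Prime) (t x y : R) :
    D.sigmaNumerator (t + p * x) (y - x) = D.sigmaNumerator t y - D.sigmaNumerator t x +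
      (1 - (p : R) ^ (p - 1)) * (frobeniusDefect p y (-x) - frobeniusDefect p x (-x)) := by
  rw [sigmaNumerator, sigmaNumerator, sigmaNumerator, delta_sub, dividedFrobeniusDefect_sub hp]
  ring

lemma pow_eq_prime_mul_sigma (hp : p.Prime) (hu : IsLeftRegular (1 - (p : R) ^ (p - 1)))
    {t τ σ : R} (hδ : D.δ (t + p * τ) = D.δ t)
    (hσ : (1 - (p : R) ^ (p - 1)) * σ = D.sigmaNumerator t τ) :
    τ ^ p = p * σ := by
  apply hu
  linear_combination hδ - D.delta_add_prime_mul hp t τ - p * hσ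

end DeltaStructure

theorem sigma_cocycle_general {p : ℕ} (hp : p.Prime) {R : Type*} [CommRing R]
    (D : DeltaStructure p R) (hu : IsLeftRegular (1 - (p : R) ^ (p - 1)))
    {t₁ t₂ τ₁₂ τ₁₃ σ₁₂ σ₁₃ σ₂₃ : R}
    (hδ : D.δ t₂ = D.δ t₁) (h₁₂ : (p : R) * τ₁₂ = t₂ - t₁)
    (hσ₁₂ : (1 - (p : R) ^ (p - 1)) * σ₁₂ = D.sigmaNumerator t₁ τ₁₂)
    (hσ₁₃ : (1 - (p : R) ^ (p - 1)) * σ₁₃ = D.sigmaNumerator t₁ τ₁₃)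
    (hσ₂₃ : (1 - (p : R) ^ (p - 1)) * σ₂₃ = D.sigmaNumerator t₂ (τ₁₃ - τ₁₂)) :
    σ₂₃ = σ₁₃ + (-1 : R) ^ p * σ₁₂ + frobeniusDefect p τ₁₃ (-τ₁₂) := by
  obtain rfl : t₂ = t₁ + p * τ₁₂ := by rw [h₁₂, add_sub_cancel]
  have hdiff : σ₂₃ = σ₁₃ - σ₁₂ +
      (frobeniusDefect p τ₁₃ (-τ₁₂) - frobeniusDefect p τ₁₂ (-τ₁₂)) := by
    apply hu
    linear_combination hσ₂₃ - hσ₁₃ + hσ₁₂ + D.sigmaNumerator_sub hp t₁ τ₁₂ τ₁₃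
  have hpow : τ₁₂ ^ p = p * σ₁₂ := D.pow_eq_prime_mul_sigma hp hu hδ hσ₁₂
  rw [hdiff, ← neg_sub_frobeniusDefect_self_neg hp hpow]
  ring

/-- Cocycle relation for the divided powers `σ_{ij}`.  Here `R` is a δ-ring which is a
`ℤ_{(p)}`-algebra (every integer prime to `p` is invertible in `R`; in particular
`1 − p^{p−1}` is a unit, so each `σ_{ij}` is characterized by its defining equation
`(1 − p^{p−1})·σ_{ij} = −δ(τ_{ij}) + ∑_{ν=1}^{p−1} (1/p)·C(p,ν)·t_i^{p−ν}·p^{ν−1}·τ_{ij}^ν`).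
Then `σ_{23} = σ_{13} + (−1)^p·σ_{12} + ∑_{ν=1}^{p−1} (1/p)·C(p,ν)·τ_{13}^ν·(−τ_{12})^{p−ν}`. -/
theorem sigma_cocycle (p : ℕ) (hp : p.Prime) (R : Type*) [CommRing R]
    (D : DeltaStructure p R)
    (hZp : ∀ n : ℤ, ¬ (p : ℤ) ∣ n → IsUnit (n : R))
    (t₁ t₂ t₃ τ₁₂ τ₁₃ : R)
    (ht₁ : D.δ t₁ = 0) (ht₂ : D.δ t₂ = 0) (ht₃ : D.δ t₃ = 0)
    (h₁₂ : (p : R) * τ₁₂ = t₂ - t₁) (h₁₃ : (p : R) * τ₁₃ = t₃ - t₁)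
    (σ₁₂ σ₁₃ σ₂₃ : R)
    (hσ₁₂ : (1 - (p : R) ^ (p - 1)) * σ₁₂ =
      -D.δ τ₁₂ + ∑ ν ∈ Finset.Ioo 0 p,
        ((p.choose ν / p : ℕ) : R) * t₁ ^ (p - ν) * (p : R) ^ (ν - 1) * τ₁₂ ^ ν)
    (hσ₁₃ : (1 - (p : R) ^ (p - 1)) * σ₁₃ =
      -D.δ τ₁₃ + ∑ ν ∈ Finset.Ioo 0 p,
        ((p.choose ν / p : ℕ) : R) * t₁ ^ (p - ν) * (p : R) ^ (ν - 1) * τ₁₃ ^ ν)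
    (hσ₂₃ : (1 - (p : R) ^ (p - 1)) * σ₂₃ =
      -D.δ (τ₁₃ - τ₁₂) + ∑ ν ∈ Finset.Ioo 0 p,
        ((p.choose ν / p : ℕ) : R) * t₂ ^ (p - ν) * (p : R) ^ (ν - 1) * (τ₁₃ - τ₁₂) ^ ν) :
    σ₂₃ = σ₁₃ + (-1 : R) ^ p * σ₁₂ +
      ∑ ν ∈ Finset.Ioo 0 p,
        ((p.choose ν / p : ℕ) : R) * τ₁₃ ^ ν * (-τ₁₂) ^ (p - ν) := by
  have hu : IsUnit (1 - (p : R) ^ (p - 1)) := by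
    simpa using hZp _ (not_dvd_one_sub_pow (Nat.prime_iff_prime_int.1 hp).not_isUnit
      (Nat.sub_ne_zero_of_lt hp.one_lt))
  exact sigma_cocycle_general hp D hu.isRegular.left (ht₂.trans ht₁.symm) h₁₂ hσ₁₂ hσ₁₃ hσ₂₃
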